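/- Let f_{2/3} be the Mittag-Leffler density of index 2/3. Then for every x ≥ 0: ∫₀^∞ e^{-t}·t^{-2/3}·f_{2/3}(t^{-2/3}·x) dt = e^{-x}. -/

import Mathlib

open Real MeasureTheory Set Filter Topology

noncomputable section

/-- The Mittag-Leffler density of index `2/3`, defined by its entire power series. -/
def mittagLeffler23 (x : ℝ) : ℝ :=
  (1 / π) * ∑' k : ℕ,
    (Real.sin (2 * π * ((k : ℝ) + 1) / 3) * Real.Gamma (2 * ((k : ℝ) + 1) / 3) /
      (Nat.factorial k : ℝ)) * (-x) ^ k

lemma aux_int (s c : ℝ) (hs : -1 < s) (hc : 0 < c) :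
    IntegrableOn (fun t : ℝ => t ^ s * Real.exp (-(c * t))) (Ioi 0) := by
  have := integrableOn_rpow_mul_exp_neg_mul_rpow hs one_pos hc
  simpa [neg_mul] using this

lemma norm_cexp_neg (z : ℂ) (t : ℝ) : ‖Complex.exp (-(z * t))‖ = Real.exp (-(z.re * t)) := by
  rw [Complex.norm_exp]; simp

lemma gammaC_diff (a : ℝ) (ha : 0 < a) (z : ℂ) (hz : 0 < z.re) :
    DifferentiableAt ℂ (fun z : ℂ => ∫ t in Ioi (0:ℝ),
      ((t ^ (a - 1) : ℝ) : ℂ) * Complex.exp (-(z * t))) z := by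
  have hm : ∀ (b : ℝ) (z : ℂ), AEStronglyMeasurable
      (fun t : ℝ => ((t ^ b : ℝ) : ℂ) * Complex.exp (-(z * t))) (volume.restrict (Ioi 0)) := by
    intro b z
    apply Measurable.aestronglyMeasurable
    fun_prop
  have key := hasDerivAt_integral_of_dominated_loc_of_deriv_le (𝕜 := ℂ)
    (μ := volume.restrict (Ioi (0:ℝ)))
    (F := fun (z : ℂ) (t : ℝ) => ((t ^ (a - 1) : ℝ) : ℂ) * Complex.exp (-(z * t)))
    (F' := fun (z : ℂ) (t : ℝ) => -(((t ^ a : ℝ) : ℂ) * Complex.exp (-(z * t))))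
    (x₀ := z) (s := {w : ℂ | z.re / 2 < w.re})
    (bound := fun t => t ^ a * Real.exp (-(z.re / 2 * t)))
    ((isOpen_lt continuous_const Complex.continuous_re).mem_nhds (by simp; linarith))
    (Eventually.of_forall fun w => hm _ w) ?_ (hm _ _).neg ?_
    (aux_int a (z.re / 2) (by linarith) (by linarith)) ?_
  · exact key.2.differentiableAt
  · refine (aux_int (a - 1) z.re (by linarith) hz).mono' (hm _ _) ?_
    refine (ae_restrict_iff' measurableSet_Ioi).2 (Eventually.of_forall fun t ht => ?_)
    have ht : 0 < t := ht
    rw [norm_mul, norm_cexp_neg, Complex.norm_real, Real.norm_of_nonneg (by positivity)]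
  · refine (ae_restrict_iff' measurableSet_Ioi).2 (Eventually.of_forall fun t ht w hw => ?_)
    have ht : 0 < t := ht
    have hw : z.re / 2 < w.re := hw
    rw [norm_neg, norm_mul, norm_cexp_neg, Complex.norm_real, Real.norm_of_nonneg (by positivity)]
    gcongr
  · refine (ae_restrict_iff' measurableSet_Ioi).2 (Eventually.of_forall fun t ht w hw => ?_)
    have ht : 0 < t := ht
    have h1 : HasDerivAt (fun w : ℂ => -(w * t)) (-(t:ℂ)) w := by
      have := ((hasDerivAt_id w).mul_const (t:ℂ)).neg
      exact this.congr_deriv (by simp)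
    have h2 := (h1.cexp).const_mul (((t ^ (a - 1) : ℝ) : ℂ))
    refine h2.congr_deriv ?_
    have : t ^ a = t ^ (a - 1) * t := by
      rw [← Real.rpow_add_one ht.ne']; simp
    rw [this]; push_cast; ring

lemma gammaC (a : ℝ) (ha : 0 < a) (z : ℂ) (hz : 0 < z.re) :
    ∫ t in Ioi (0:ℝ), ((t ^ (a - 1) : ℝ) : ℂ) * Complex.exp (-(z * t)) =
      Real.Gamma a * Complex.exp (-(a * Complex.log z)) := by
  have hU : IsOpen {w : ℂ | 0 < w.re} := isOpen_lt continuous_const Complex.continuous_re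
  have hA : AnalyticOnNhd ℂ (fun z : ℂ => ∫ t in Ioi (0:ℝ),
      ((t ^ (a - 1) : ℝ) : ℂ) * Complex.exp (-(z * t))) {w : ℂ | 0 < w.re} :=
    DifferentiableOn.analyticOnNhd
      (fun w hw => (gammaC_diff a ha w hw).differentiableWithinAt) hU
  have hB : AnalyticOnNhd ℂ (fun z : ℂ => (Real.Gamma a : ℂ) * Complex.exp (-(a * Complex.log z)))
      {w : ℂ | 0 < w.re} := by
    refine DifferentiableOn.analyticOnNhd (fun w hw => ?_) hU
    have : w ∈ Complex.slitPlane := Or.inl hw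
    have := (Complex.differentiableAt_log this)
    exact (DifferentiableAt.const_mul
      ((this.const_mul (a:ℂ)).neg.cexp) _).differentiableWithinAt
  refine hA.eqOn_of_preconnected_of_frequently_eq hB
    (convex_halfSpace_re_gt 0).isPreconnected (z₀ := 1) (by simp) ?_ hz
  have hreal : ∀ r : ℝ, 0 < r → (∫ t in Ioi (0:ℝ),
      ((t ^ (a - 1) : ℝ) : ℂ) * Complex.exp (-((r:ℂ) * t))) =
      Real.Gamma a * Complex.exp (-(a * Complex.log r)) := by
    intro r hr
    have := Real.integral_rpow_mul_exp_neg_mul_Ioi ha hr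
    have h2 : (∫ t in Ioi (0:ℝ), ((t ^ (a - 1) : ℝ) : ℂ) * Complex.exp (-((r:ℂ) * t))) =
        ∫ t in Ioi (0:ℝ), ((t ^ (a - 1) * Real.exp (-(r * t)) : ℝ) : ℂ) := by
      congr 1; ext t; push_cast; rfl
    rw [h2, integral_complex_ofReal, this, ← Complex.ofReal_log hr.le,
      Real.rpow_def_of_pos (by positivity)]
    push_cast
    simp [Complex.ofReal_log hr.le]
    ring_nf
  have ht : Tendsto (fun r : ℝ => (r : ℂ)) (𝓝[≠] 1) (𝓝[≠] 1) := by
    refine tendsto_nhdsWithin_iff.2 ⟨?_, ?_⟩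
    · exact (Complex.continuous_ofReal.tendsto' 1 1 (by simp)).mono_left nhdsWithin_le_nhds
    · filter_upwards [self_mem_nhdsWithin] with r hr
      simpa using hr
  refine ht.frequently (Eventually.frequently ?_)
  have : ∀ᶠ r : ℝ in 𝓝[≠] 1, 0 < r :=
    nhdsWithin_le_nhds (lt_mem_nhds one_pos)
  filter_upwards [this] with r hr
  exact hreal r hr

def bb (θ : ℝ) : ℂ := Complex.exp (θ * Complex.I)
def cc (θ : ℝ) : ℂ := Complex.exp ((3 / 2 * θ : ℝ) * Complex.I)
def th : ℝ := 5 * π / 12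
def B : ℂ := bb th
def C : ℂ := cc th

lemma B_norm : ‖B‖ = 1 := by simp [B, bb, Complex.norm_exp_ofReal_mul_I]
lemma B_re : 0 < B.re := by
  rw [B, bb, Complex.exp_ofReal_mul_I_re]
  apply Real.cos_pos_of_mem_Ioo
  constructor <;> unfold th <;> linarith [Real.pi_pos]
lemma C_re : C.re < 0 := by
  rw [C, cc, Complex.exp_ofReal_mul_I_re]
  apply Real.cos_neg_of_pi_div_two_lt_of_lt <;> unfold th <;> linarith [Real.pi_pos]
lemma B_C : B ^ 3 = C ^ 2 := by
  rw [B, C, bb, cc, ← Complex.exp_nat_mul, ← Complex.exp_nat_mul]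
  congr 1; push_cast; ring

lemma log_negC : Complex.log (-C) = ((3 / 2 * th - π : ℝ) : ℂ) * Complex.I := by
  have : -C = Complex.exp (((3 / 2 * th - π : ℝ) : ℂ) * Complex.I) := by
    push_cast
    rw [sub_mul, Complex.exp_sub, Complex.exp_pi_mul_I, C, cc]
    push_cast; ring
  rw [this, Complex.log_exp] <;>
  · simp [th]; linarith [Real.pi_pos]

lemma log_xB (x : ℝ) (hx : 0 < x) : Complex.log (x * B) = Real.log x + (th : ℂ) * Complex.I := by
  rw [Complex.log_ofReal_mul hx (by simp [B, bb]), B, bb, Complex.log_exp] <;>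
  · simp [th]; linarith [Real.pi_pos]

lemma term_int (k : ℕ) :
    ∫ w in Ioi (0:ℝ), (w : ℂ) ^ k * Complex.exp (C * ((w ^ (3/2:ℝ) : ℝ) : ℂ)) =
      (2 / 3 : ℂ) * Real.Gamma (2 * ((k:ℝ) + 1) / 3) *
        Complex.exp (((2 * π / 3 - th) * ((k:ℝ) + 1) : ℝ) * Complex.I) := by
  have h := gammaC (2 * ((k:ℝ) + 1) / 3) (by positivity) (-C) (by simpa using C_re)
  have hs := integral_comp_rpow_Ioi_of_pos (p := 3/2) (by norm_num : (0:ℝ) < 3/2)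
    (g := fun t : ℝ => ((t ^ (2 * ((k:ℝ) + 1) / 3 - 1) : ℝ) : ℂ) * Complex.exp (-(-C * t)))
  rw [h] at hs
  have h3 : (∫ w in Ioi (0:ℝ), (w : ℂ) ^ k * Complex.exp (C * ((w ^ (3/2:ℝ) : ℝ) : ℂ))) =
     (2/3:ℂ) * ∫ x in Ioi (0:ℝ), ((3/2 * x ^ ((3/2:ℝ) - 1)) : ℝ) •
      ((((x ^ (3/2:ℝ)) ^ (2 * ((k:ℝ) + 1) / 3 - 1) : ℝ) : ℂ) *
        Complex.exp (-(-C * ((x ^ (3/2:ℝ) : ℝ) : ℂ)))) := by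
    rw [← integral_const_mul]
    refine setIntegral_congr_fun measurableSet_Ioi fun w hw => ?_
    have hw : 0 < w := hw
    have e : w ^ k = w ^ ((3/2:ℝ) - 1) * (w ^ (3/2:ℝ)) ^ (2 * ((k:ℝ) + 1) / 3 - 1) := by
      rw [← Real.rpow_mul hw.le, ← Real.rpow_add hw, ← Real.rpow_natCast]
      congr 1; ring
    have e' : (w:ℂ) ^ k = ((w ^ ((3/2:ℝ) - 1) : ℝ) : ℂ) *
        (((w ^ (3/2:ℝ)) ^ (2 * ((k:ℝ) + 1) / 3 - 1) : ℝ) : ℂ) := by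
      rw [← Complex.ofReal_mul, ← e]; push_cast; rfl
    simp only [e', Complex.real_smul, neg_mul, neg_neg]
    push_cast
    ring
  rw [h3, hs, log_negC, mul_assoc]
  congr 3
  push_cast
  ring

lemma norm_E1 (w : ℝ) (t : ℝ) : ‖Complex.exp (C * ((t * w ^ (3/2:ℝ) : ℝ) : ℂ))‖ =
    Real.exp (C.re * (t * w ^ (3/2:ℝ))) := by
  rw [Complex.norm_exp, Complex.re_mul_ofReal]

lemma norm_E2 (x w : ℝ) : ‖Complex.exp (-(x * B * w))‖ = Real.exp (-(x * B.re * w)) := by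
  rw [Complex.norm_exp]; simp

lemma int_bound (x : ℝ) :
    IntegrableOn (fun w : ℝ => Real.exp (C.re * w ^ (3/2:ℝ)) * Real.exp (x * w)) (Ioi 0) := by
  have hC := C_re
  refine integrable_of_isBigO_exp_neg one_pos ?_ ?_
  · apply Continuous.continuousOn
    have : Continuous fun w : ℝ => w ^ (3/2:ℝ) := Real.continuous_rpow_const (by norm_num)
    fun_prop
  · simp_rw [← Real.exp_add]
    refine Asymptotics.IsLittleO.isBigO ?_
    rw [Real.isLittleO_exp_comp_exp_comp]
    suffices Tendsto (fun w : ℝ => w * (-C.re * w ^ ((3/2:ℝ) - 1) + (-1 - x))) atTop atTop by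
      refine Tendsto.congr' ?_ this
      filter_upwards [Ioi_mem_atTop (0 : ℝ)] with w hw
      have hw : 0 < w := hw
      rw [rpow_sub_one hw.ne']
      field_simp
      ring
    apply tendsto_id.atTop_mul_atTop₀
    refine tendsto_atTop_add_const_right atTop _ ?_
    exact Tendsto.const_mul_atTop (by linarith) (tendsto_rpow_atTop (by norm_num))

lemma ML_hasSum (x : ℝ) (hx : 0 ≤ x) :
    HasSum (fun k : ℕ => ∫ w in Ioi (0:ℝ), ((w : ℂ) ^ k *
        Complex.exp (C * ((w ^ (3/2:ℝ) : ℝ) : ℂ))) * ((-(x * B)) ^ k / (Nat.factorial k : ℂ)))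
      (∫ w in Ioi (0:ℝ), Complex.exp (C * ((w ^ (3/2:ℝ) : ℝ) : ℂ)) *
        Complex.exp (-(x * B * w))) := by
  have hs : ∀ w : ℝ, HasSum (fun k : ℕ => Real.exp (C.re * w ^ (3/2:ℝ)) *
      ((x * w) ^ k / (Nat.factorial k : ℝ)))
      (Real.exp (C.re * w ^ (3/2:ℝ)) * Real.exp (x * w)) := by
    intro w
    have := NormedSpace.expSeries_div_hasSum_exp (x * w)
    rw [← Real.exp_eq_exp_ℝ] at this
    exact this.mul_left _
  refine hasSum_integral_of_dominated_convergence
    (fun k w => Real.exp (C.re * w ^ (3/2:ℝ)) * ((x * w) ^ k / (Nat.factorial k : ℝ))) ?_ ?_ ?_ ?_ ?_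
  · intro n
    apply Measurable.aestronglyMeasurable
    fun_prop
  · intro n
    refine (ae_restrict_iff' measurableSet_Ioi).2 (Eventually.of_forall fun w hw => ?_)
    have hw : 0 < w := hw
    have := norm_E1 w 1
    rw [one_mul] at this
    rw [norm_mul, norm_mul, this, norm_div, norm_pow, norm_pow, norm_neg, norm_mul, B_norm]
    simp only [Complex.norm_real, Real.norm_of_nonneg hx, Real.norm_of_nonneg hw.le,
      Complex.norm_natCast]
    apply le_of_eq; rw [mul_pow]; ring
  · exact Eventually.of_forall fun w => (hs w).summable
  · simp_rw [fun w => (hs w).tsum_eq]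
    exact int_bound x
  · refine Eventually.of_forall fun w => ?_
    have := NormedSpace.expSeries_div_hasSum_exp (-(x * B * w))
    rw [← Complex.exp_eq_exp_ℂ] at this
    have := this.mul_left (Complex.exp (C * ((w ^ (3/2:ℝ) : ℝ) : ℂ)))
    refine Eq.subst (motive := fun g => HasSum g _) (funext fun k => ?_) this
    rw [show -(x * B * w) = -(x * B) * w by ring, mul_pow]; ring

lemma ML_int (x : ℝ) (hx : 0 ≤ x) : mittagLeffler23 x = 3 / (2 * π) *
    (B * ∫ w in Ioi (0:ℝ), Complex.exp (C * ((w ^ (3/2:ℝ) : ℝ) : ℂ)) *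
        Complex.exp (-(x * B * w))).im := by
  have h := Complex.hasSum_im ((ML_hasSum x hx).mul_left B)
  rw [← h.tsum_eq, mittagLeffler23, ← tsum_mul_left, ← tsum_mul_left]
  refine tsum_congr fun k => ?_
  rw [integral_mul_const, term_int]
  have e : B * ((2 / 3 : ℂ) * Real.Gamma (2 * ((k:ℝ) + 1) / 3) *
        Complex.exp (((2 * π / 3 - th) * ((k:ℝ) + 1) : ℝ) * Complex.I) *
        ((-(x * B)) ^ k / (Nat.factorial k : ℂ))) =
      ((2 / 3 * Real.Gamma (2 * ((k:ℝ) + 1) / 3) * (-x) ^ k / (Nat.factorial k) : ℝ) : ℂ) *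
        Complex.exp ((2 * π * ((k:ℝ) + 1) / 3 : ℝ) * Complex.I) := by
    have : Complex.exp ((2 * π * ((k:ℝ) + 1) / 3 : ℝ) * Complex.I) =
        Complex.exp (((2 * π / 3 - th) * ((k:ℝ) + 1) : ℝ) * Complex.I) * B ^ (k + 1) := by
      rw [B, bb, ← Complex.exp_nat_mul, ← Complex.exp_add]
      congr 1; push_cast; ring
    rw [this, show -(x * B) = -(x:ℂ) * B by ring, mul_pow]
    push_cast
    ring
  rw [e, Complex.im_ofReal_mul, Complex.exp_ofReal_mul_I_im]
  field_simp

lemma ML_scaled (x t : ℝ) (hx : 0 ≤ x) (ht : 0 < t) :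
    t ^ (-(2:ℝ)/3) * mittagLeffler23 (t ^ (-(2:ℝ)/3) * x) = 3 / (2 * π) *
    (B * ∫ w in Ioi (0:ℝ), Complex.exp (C * ((t * w ^ (3/2:ℝ) : ℝ) : ℂ)) *
        Complex.exp (-(x * B * w))).im := by
  rw [ML_int _ (by positivity)]
  have h := integral_comp_mul_left_Ioi (fun w : ℝ => Complex.exp (C * ((w ^ (3/2:ℝ) : ℝ) : ℂ)) *
        Complex.exp (-(((t ^ (-(2:ℝ)/3) * x : ℝ) : ℂ) * B * w))) 0
        (show 0 < t ^ ((2:ℝ)/3) by positivity)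
  have hi : (t ^ ((2:ℝ)/3))⁻¹ = t ^ (-(2:ℝ)/3) := by
    rw [← Real.rpow_neg ht.le]; congr 1; ring
  rw [mul_zero, hi] at h
  have h2 : (∫ w in Ioi (0:ℝ), Complex.exp (C * ((t * w ^ (3/2:ℝ) : ℝ) : ℂ)) *
        Complex.exp (-(x * B * w))) = ∫ w in Ioi (0:ℝ),
        Complex.exp (C * (((t ^ ((2:ℝ)/3) * w) ^ (3/2:ℝ) : ℝ) : ℂ)) *
        Complex.exp (-(((t ^ (-(2:ℝ)/3) * x : ℝ) : ℂ) * B * ((t ^ ((2:ℝ)/3) * w : ℝ) : ℂ))) := by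
    refine setIntegral_congr_fun measurableSet_Ioi fun w hw => ?_
    have hw : 0 < w := hw
    have e1 : (t ^ ((2:ℝ)/3) * w) ^ (3/2:ℝ) = t * w ^ (3/2:ℝ) := by
      rw [Real.mul_rpow (by positivity) hw.le, ← Real.rpow_mul ht.le]; norm_num
    have e2 : (x : ℂ) = ((t ^ (-(2:ℝ)/3) * x : ℝ) : ℂ) * ((t ^ ((2:ℝ)/3) : ℝ) : ℂ) := by
      rw [← Complex.ofReal_mul]; congr 1
      rw [← hi]; field_simp
    simp only [e1]
    congr 2
    rw [Complex.ofReal_mul (t ^ ((2:ℝ)/3)) w]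
    nth_rewrite 1 [e2]
    ring
  rw [h2, h, Complex.real_smul, mul_left_comm B, Complex.im_ofReal_mul]
  ring

lemma int_one_div : IntegrableOn (fun w : ℝ => (1 + -C.re * w ^ (3/2:ℝ))⁻¹) (Ioi 0) := by
  have hC := C_re
  have hm : ∀ s : Set ℝ, AEStronglyMeasurable (fun w : ℝ => (1 + -C.re * w ^ (3/2:ℝ))⁻¹)
      (volume.restrict s) := by
    intro s
    apply Measurable.aestronglyMeasurable
    fun_prop
  rw [← Ioc_union_Ioi_eq_Ioi zero_le_one]
  refine IntegrableOn.union ?_ ?_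
  · refine Integrable.mono' (g := fun _ => (1:ℝ)) (by simp) (hm _) ?_
    refine (ae_restrict_iff' measurableSet_Ioc).2 (Eventually.of_forall fun w hw => ?_)
    have hw : 0 < w := hw.1
    have : 0 ≤ -C.re * w ^ (3/2:ℝ) := mul_nonneg (by linarith) (by positivity)
    rw [Real.norm_of_nonneg (by positivity)]
    exact inv_le_one_of_one_le₀ (by linarith)
  · refine Integrable.mono' (g := fun w : ℝ => (-C.re)⁻¹ * w ^ (-3/2:ℝ))
      ((integrableOn_Ioi_rpow_of_lt (by norm_num) one_pos).const_mul _) (hm _) ?_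
    refine (ae_restrict_iff' measurableSet_Ioi).2 (Eventually.of_forall fun w hw => ?_)
    have hw : 0 < w := lt_trans one_pos hw
    have : 0 < -C.re * w ^ (3/2:ℝ) := mul_pos (by linarith) (by positivity)
    rw [Real.norm_of_nonneg (by positivity), show (-3/2:ℝ) = -(3/2) by norm_num,
      Real.rpow_neg hw.le, ← mul_inv]
    exact inv_anti₀ this (by linarith)

lemma int_prod (x : ℝ) (hx : 0 ≤ x) : Integrable (Function.uncurry fun (w t : ℝ) =>
    (Real.exp (-t) : ℂ) * (Complex.exp (C * ((t * w ^ (3/2:ℝ) : ℝ) : ℂ)) *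
        Complex.exp (-(x * B * w)))) ((volume.restrict (Ioi 0)).prod (volume.restrict (Ioi 0))) := by
  have hC := C_re
  have hB := B_re
  have hG : Integrable (fun q : ℝ × ℝ => Real.exp (-(1 + -C.re * q.1 ^ (3/2:ℝ)) * q.2))
      ((volume.restrict (Ioi 0)).prod (volume.restrict (Ioi 0))) := by
    rw [integrable_prod_iff]
    · constructor
      · refine (ae_restrict_iff' measurableSet_Ioi).2 (Eventually.of_forall fun w hw => ?_)
        have hw : 0 < w := hw
        have : 0 < -C.re * w ^ (3/2:ℝ) := mul_pos (by linarith) (by positivity)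
        have hn : -(1 + -C.re * w ^ (3/2:ℝ)) < 0 := by linarith
        exact integrableOn_exp_mul_Ioi hn 0
      · refine IntegrableOn.congr_fun int_one_div (fun w hw => ?_) measurableSet_Ioi
        have hw : 0 < w := hw
        have : 0 < -C.re * w ^ (3/2:ℝ) := mul_pos (by linarith) (by positivity)
        simp only [Real.norm_of_nonneg (Real.exp_nonneg _)]
        rw [integral_exp_mul_Ioi (by linarith) 0]
        rw [mul_zero, Real.exp_zero, neg_div_neg_eq, one_div]
    · apply Measurable.aestronglyMeasurable
      fun_prop
  refine hG.mono' ?_ ?_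
  · apply Measurable.aestronglyMeasurable
    unfold Function.uncurry
    fun_prop
  · rw [Measure.prod_restrict]
    refine (ae_restrict_iff' (measurableSet_Ioi.prod measurableSet_Ioi)).2
      (Eventually.of_forall fun q hq => ?_)
    obtain ⟨w, t⟩ := q
    have hw : 0 < w := hq.1
    have ht : 0 < t := hq.2
    simp only [Function.uncurry]
    rw [norm_mul, norm_mul, norm_E1, norm_E2, Complex.norm_real,
      Real.norm_of_nonneg (Real.exp_nonneg _), ← Real.exp_add, ← Real.exp_add]
    apply Real.exp_le_exp.2
    have : 0 ≤ x * B.re * w := by positivity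
    linarith

def Den (w : ℝ) : ℂ := 1 - C * ((w ^ (3/2:ℝ) : ℝ) : ℂ)

lemma Den_re (w : ℝ) : (Den w).re = 1 + -C.re * w ^ (3/2:ℝ) := by
  simp only [Den, Complex.sub_re, Complex.one_re, Complex.re_mul_ofReal]; ring

def II (n : ℕ) (x : ℝ) : ℂ :=
  ∫ w in Ioi (0:ℝ), (-(B * w)) ^ n * (Complex.exp (-(x * B * w)) / Den w)

lemma LHS_eq (x : ℝ) (hx : 0 ≤ x) : (∫ t in Ioi (0:ℝ),
        Real.exp (-t) * t ^ (-(2:ℝ)/3) * mittagLeffler23 (t ^ (-(2:ℝ)/3) * x)) =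
      3 / (2 * π) * (B * II 0 x).im := by
  have hC := C_re
  have hI := int_prod x hx
  have h1 : (∫ t in Ioi (0:ℝ),
        Real.exp (-t) * t ^ (-(2:ℝ)/3) * mittagLeffler23 (t ^ (-(2:ℝ)/3) * x)) =
      ∫ t in Ioi (0:ℝ), 3 / (2 * π) * Complex.imCLM (B * ∫ w in Ioi (0:ℝ),
       (Real.exp (-t) : ℂ) * (Complex.exp (C * ((t * w ^ (3/2:ℝ) : ℝ) : ℂ)) *
        Complex.exp (-(x * B * w)))) := by
    refine setIntegral_congr_fun measurableSet_Ioi fun t ht => ?_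
    have ht : 0 < t := ht
    rw [mul_assoc, ML_scaled x t hx ht, integral_const_mul, mul_left_comm B,
      Complex.imCLM_apply, Complex.im_ofReal_mul]
    ring
  rw [h1, integral_const_mul, ContinuousLinearMap.integral_comp_comm, integral_const_mul,
    ← integral_integral_swap hI, Complex.imCLM_apply]
  · congr 3
    refine setIntegral_congr_fun measurableSet_Ioi fun w hw => ?_
    have hw : 0 < w := hw
    have : 0 < -C.re * w ^ (3/2:ℝ) := mul_pos (by linarith) (by positivity)
    have hD : (-Den w).re < 0 := by rw [Complex.neg_re, Den_re]; linarith
    have := integral_exp_mul_complex_Ioi hD 0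
    simp only [pow_zero, one_mul]
    have e : ∀ t : ℝ, (Real.exp (-t) : ℂ) * (Complex.exp (C * ((t * w ^ (3/2:ℝ) : ℝ) : ℂ)) *
        Complex.exp (-(x * B * w))) = Complex.exp (-Den w * t) * Complex.exp (-(x * B * w)) := by
      intro t
      rw [← mul_assoc, Complex.ofReal_exp, ← Complex.exp_add]
      congr 2
      rw [Den]; push_cast; ring
    simp_rw [e]
    rw [integral_mul_const, this]
    simp
    ring
  · exact hI.swap.integral_prod_left.const_mul B

lemma Den_ge (w : ℝ) : 1 + -C.re * w ^ (3/2:ℝ) ≤ ‖Den w‖ := by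
  rw [← Den_re]; exact Complex.re_le_norm _

lemma Den_ge_one (w : ℝ) (hw : 0 < w) : 1 ≤ ‖Den w‖ := by
  have := Den_ge w
  have hC := C_re
  have : 0 < -C.re * w ^ (3/2:ℝ) := mul_pos (by linarith) (by positivity)
  linarith

lemma II_meas (n : ℕ) (x : ℝ) : AEStronglyMeasurable (fun w : ℝ =>
    (-(B * w)) ^ n * (Complex.exp (-(x * B * w)) / Den w)) (volume.restrict (Ioi 0)) := by
  apply Measurable.aestronglyMeasurable
  unfold Den
  fun_prop

lemma II_norm (n : ℕ) (x w : ℝ) (hw : 0 < w) :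
    ‖(-(B * w)) ^ n * (Complex.exp (-(x * B * w)) / Den w)‖ ≤
      w ^ (n:ℝ) * Real.exp (-(x * B.re * w)) := by
  rw [norm_mul, norm_div, norm_E2, norm_pow, norm_neg, norm_mul, B_norm, one_mul,
    Complex.norm_real, Real.norm_of_nonneg hw.le, Real.rpow_natCast]
  gcongr
  exact div_le_self (Real.exp_nonneg _) (Den_ge_one w hw)

lemma II_bint (n : ℕ) (x : ℝ) (hx : 0 < x) :
    IntegrableOn (fun w : ℝ => w ^ (n:ℝ) * Real.exp (-(x * B.re * w))) (Ioi 0) :=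
  aux_int _ _ (by have : (0:ℝ) ≤ n := by positivity
                  linarith) (mul_pos hx B_re)

lemma II_int (n : ℕ) (x : ℝ) (hx : 0 < x) : IntegrableOn (fun w : ℝ =>
    (-(B * w)) ^ n * (Complex.exp (-(x * B * w)) / Den w)) (Ioi 0) := by
  refine (II_bint n x hx).mono' (II_meas n x) ?_
  exact (ae_restrict_iff' measurableSet_Ioi).2
    (Eventually.of_forall fun w hw => II_norm n x w hw)

lemma II_deriv (n : ℕ) (x : ℝ) (hx : 0 < x) : HasDerivAt (II n) (II (n + 1) x) x := by
  refine (hasDerivAt_integral_of_dominated_loc_of_deriv_le (𝕜 := ℝ)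
    (μ := volume.restrict (Ioi (0:ℝ)))
    (F := fun (x : ℝ) (w : ℝ) => (-(B * w)) ^ n * (Complex.exp (-(x * B * w)) / Den w))
    (F' := fun (x : ℝ) (w : ℝ) => (-(B * w)) ^ (n + 1) * (Complex.exp (-(x * B * w)) / Den w))
    (x₀ := x) (s := Ioi (x / 2))
    (bound := fun w => w ^ ((n + 1 : ℕ):ℝ) * Real.exp (-(x / 2 * B.re * w)))
    (Ioi_mem_nhds (by linarith)) (Eventually.of_forall fun w => II_meas _ w)
    (II_int n x hx) (II_meas _ _) ?_ (II_bint _ _ (by linarith)) ?_).2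
  · refine (ae_restrict_iff' measurableSet_Ioi).2 (Eventually.of_forall fun w hw y hy => ?_)
    have hw : 0 < w := hw
    have hy : x / 2 < y := hy
    refine (II_norm _ y w hw).trans ?_
    have := B_re
    gcongr
  · refine (Eventually.of_forall fun w y hy => ?_)
    have h0 : HasDerivAt (fun y : ℝ => (y : ℂ)) 1 y := Complex.ofRealCLM.hasDerivAt
    have h1 := ((((h0.mul_const B).mul_const (w:ℂ)).neg.cexp).div_const (Den w)).const_mul
      ((-(B * w)) ^ n)
    refine h1.congr_deriv ?_
    rw [pow_succ]
    simp only [Pi.neg_apply]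
    ring

lemma II_cont : ContinuousWithinAt (II 0) (Ici 0) 0 := by
  refine continuousWithinAt_of_dominated
    (bound := fun w => (1 + -C.re * w ^ (3/2:ℝ))⁻¹)
    (Eventually.of_forall fun w => II_meas _ w) ?_ int_one_div ?_
  · filter_upwards [self_mem_nhdsWithin] with x hx
    have hx : 0 ≤ x := hx
    refine (ae_restrict_iff' measurableSet_Ioi).2 (Eventually.of_forall fun w hw => ?_)
    have hw : 0 < w := hw
    have hC := C_re
    have hB := B_re
    have : 0 < -C.re * w ^ (3/2:ℝ) := mul_pos (by linarith) (by positivity)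
    rw [pow_zero, one_mul, norm_div, norm_E2, div_eq_mul_inv]
    have h1 : Real.exp (-(x * B.re * w)) ≤ 1 := by
      rw [Real.exp_le_one_iff]
      have : 0 ≤ x * B.re * w := by positivity
      linarith
    have h2 : ‖Den w‖⁻¹ ≤ (1 + -C.re * w ^ (3/2:ℝ))⁻¹ :=
      inv_anti₀ (by linarith) (Den_ge w)
    calc _ ≤ 1 * ‖Den w‖⁻¹ := by gcongr
      _ ≤ _ := by rw [one_mul]; exact h2
  · refine Eventually.of_forall fun w => ?_
    apply Continuous.continuousWithinAt
    fun_prop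

def JJ (n : ℕ) (x : ℝ) : ℝ := (B * II n x).im

lemma JJ_deriv (n : ℕ) (x : ℝ) (hx : 0 < x) : HasDerivAt (JJ n) (JJ (n + 1) x) x := by
  have := (II_deriv n x hx).const_mul B
  exact (Complex.imCLM.hasFDerivAt.comp_hasDerivAt x this)

lemma JJ_bound (n : ℕ) : ∃ M : ℝ, ∀ x : ℝ, 1 ≤ x → |JJ n x| ≤ M := by
  refine ⟨∫ w in Ioi (0:ℝ), w ^ (n:ℝ) * Real.exp (-(1 * B.re * w)), fun x hx => ?_⟩
  refine (Complex.abs_im_le_norm _).trans ?_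
  rw [norm_mul, B_norm, one_mul]
  refine norm_integral_le_of_norm_le (II_bint n 1 one_pos) ?_
  refine (ae_restrict_iff' measurableSet_Ioi).2 (Eventually.of_forall fun w hw => ?_)
  have hw : 0 < w := hw
  refine (II_norm n x w hw).trans ?_
  have := B_re
  gcongr

lemma JJ_sum (x : ℝ) (hx : 0 < x) : JJ 3 x = - JJ 0 x := by
  have hz : 0 < ((x:ℂ) * B).re := by
    rw [Complex.re_ofReal_mul]; exact mul_pos hx B_re
  have g1 := gammaC 1 one_pos (x * B) hz
  have g2 := gammaC (5/2) (by norm_num) (x * B) hz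
  have hint : ∀ a : ℝ, 0 < a → IntegrableOn (fun t : ℝ =>
      ((t ^ (a - 1) : ℝ) : ℂ) * Complex.exp (-(x * B * t))) (Ioi 0) := by
    intro a ha
    refine (aux_int (a - 1) (x * B.re) (by linarith) (mul_pos hx B_re)).mono' ?_ ?_
    · apply Measurable.aestronglyMeasurable
      fun_prop
    · refine (ae_restrict_iff' measurableSet_Ioi).2 (Eventually.of_forall fun t ht => ?_)
      have ht : 0 < t := ht
      rw [norm_mul, norm_E2, Complex.norm_real, Real.norm_of_nonneg (by positivity)]
  have key : II 0 x + II 3 x = (∫ t in Ioi (0:ℝ),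
      ((t ^ ((1:ℝ) - 1) : ℝ) : ℂ) * Complex.exp (-(x * B * t))) + C * ∫ t in Ioi (0:ℝ),
      ((t ^ ((5/2:ℝ) - 1) : ℝ) : ℂ) * Complex.exp (-(x * B * t)) := by
    rw [II, II, ← integral_add (II_int 0 x hx) (II_int 3 x hx), ← integral_const_mul,
      ← integral_add (hint 1 one_pos) ((hint (5/2) (by norm_num)).const_mul C)]
    refine setIntegral_congr_fun measurableSet_Ioi fun w hw => ?_
    have hw : 0 < w := hw
    have hD : Den w ≠ 0 := by
      have := Den_ge_one w hw
      intro h; rw [h, norm_zero] at this; linarith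
    have hp : ((w ^ (3/2:ℝ) : ℝ) : ℂ) ^ 2 = (w : ℂ) ^ 3 := by
      rw [← Complex.ofReal_pow, ← Complex.ofReal_pow, ← Real.rpow_natCast, ← Real.rpow_mul hw.le,
        ← Real.rpow_natCast]
      norm_num
    have e5 : (5/2:ℝ) - 1 = 3/2 := by norm_num
    simp only [e5, sub_self, Real.rpow_zero, pow_zero, one_mul, Complex.ofReal_one]
    have hB3 : (-(B * w)) ^ 3 = - (C * ((w ^ (3/2:ℝ) : ℝ) : ℂ)) ^ 2 := by
      rw [mul_pow C, hp, ← B_C]; ring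
    rw [hB3]
    field_simp
    rw [Den]; ring
  rw [log_xB x hx] at g1 g2
  rw [g1, g2] at key
  have hsum : JJ 0 x + JJ 3 x = (B * (II 0 x + II 3 x)).im := by
    rw [mul_add, Complex.add_im]; rfl
  have e : B * (II 0 x + II 3 x) = ((Real.Gamma 1 * Real.exp (-Real.log x) +
      Real.Gamma (5/2) * Real.exp (-(5/2 * Real.log x)) : ℝ) : ℂ) := by
    have a1 : B * Complex.exp (-(((1:ℝ):ℂ) * (Real.log x + (th : ℂ) * Complex.I))) =
        (Real.exp (-Real.log x) : ℝ) := by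
      rw [B, bb, ← Complex.exp_add, Complex.ofReal_exp]
      congr 1; push_cast; ring
    have a2 : B * (C * Complex.exp (-(((5/2:ℝ):ℂ) * (Real.log x + (th : ℂ) * Complex.I)))) =
        (Real.exp (-(5/2 * Real.log x)) : ℝ) := by
      rw [B, C, bb, cc, ← Complex.exp_add, ← Complex.exp_add, Complex.ofReal_exp]
      congr 1; push_cast; ring
    rw [key, Complex.ofReal_add, Complex.ofReal_mul, Complex.ofReal_mul, ← a1, ← a2]
    ring
  rw [e, Complex.ofReal_im] at hsum
  linarith

def rho : ℂ := ⟨1/2, √3/2⟩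

lemma rho_sq : rho ^ 2 = rho - 1 := by
  have h3 : √3 * √3 = 3 := Real.mul_self_sqrt (by norm_num)
  rw [pow_two]
  apply Complex.ext
  · simp [rho]; nlinarith
  · simp [rho]; ring

lemma JJ_ode (x : ℝ) (hx : 0 < x) : JJ 1 x = - JJ 0 x := by
  let K : ℝ → ℂ := fun x => Complex.exp (-(rho * x)) *
    (JJ 2 x + rho * JJ 1 x + rho ^ 2 * JJ 0 x)
  have hK : ∀ x : ℝ, 0 < x → HasDerivAt K 0 x := by
    intro x hx
    have h0 : HasDerivAt (fun y : ℝ => (y : ℂ)) 1 x := Complex.ofRealCLM.hasDerivAt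
    have hj : ∀ n, HasDerivAt (fun y : ℝ => (JJ n y : ℂ)) (JJ (n + 1) x : ℝ) x :=
      fun n => (JJ_deriv n x hx).ofReal_comp
    have := ((h0.const_mul rho).neg.cexp).mul
      (((hj 2).add ((hj 1).const_mul rho)).add ((hj 0).const_mul (rho ^ 2)))
    refine this.congr_deriv ?_
    simp only [Nat.reduceAdd, zero_add, JJ_sum x hx, Pi.add_apply, Pi.neg_apply]
    have h3 : rho ^ 3 = -1 := by
      rw [pow_succ, rho_sq, sub_mul, ← pow_two, rho_sq]; ring
    push_cast
    linear_combination (-(Complex.exp (-(rho * x)) * JJ 0 x)) * h3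
  have hconst : ∀ y : ℝ, 0 < y → K y = K x := by
    intro y hy
    exact isOpen_Ioi.is_const_of_deriv_eq_zero isPreconnected_Ioi
      (fun z hz => (hK z hz).differentiableAt.differentiableWithinAt)
      (fun z hz => (hK z hz).deriv) hy hx
  obtain ⟨M0, h0⟩ := JJ_bound 0
  obtain ⟨M1, h1⟩ := JJ_bound 1
  obtain ⟨M2, h2⟩ := JJ_bound 2
  have hlim : Tendsto K atTop (𝓝 0) := by
    refine squeeze_zero_norm' (a := fun y : ℝ =>
      Real.exp (-(1/2 * y)) * (M2 + ‖rho‖ * M1 + ‖rho‖ ^ 2 * M0)) ?_ ?_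
    · filter_upwards [eventually_ge_atTop 1] with y hy
      simp only [K]
      rw [norm_mul]
      have : ‖Complex.exp (-(rho * y))‖ = Real.exp (-(1/2 * y)) := by
        rw [norm_cexp_neg]; rfl
      rw [this]
      gcongr
      refine (norm_add₃_le).trans ?_
      rw [norm_mul, norm_mul, norm_pow]
      simp only [Complex.norm_real, Real.norm_eq_abs]
      gcongr
      exacts [h2 y hy, h1 y hy, h0 y hy]
    · rw [show (0:ℝ) = 0 * (M2 + ‖rho‖ * M1 + ‖rho‖ ^ 2 * M0) by ring]
      refine Tendsto.mul_const _ ?_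
      refine Real.tendsto_exp_neg_atTop_nhds_zero.comp ?_
      exact Tendsto.const_mul_atTop (by norm_num) tendsto_id
  have hKx : K x = 0 := by
    refine tendsto_nhds_unique (tendsto_const_nhds.congr' ?_) hlim
    filter_upwards [eventually_gt_atTop 0] with y hy
    exact (hconst y hy).symm
  have := (mul_eq_zero.1 hKx).resolve_left (Complex.exp_ne_zero _)
  rw [rho_sq] at this
  have him := congrArg Complex.im this
  simp [rho] at him
  have hs : 0 < √3 := by positivity
  have : √3 / 2 * (JJ 1 x + JJ 0 x) = 0 := by linarith
  have := (mul_eq_zero.1 this).resolve_left (by positivity)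
  linarith

lemma JJ_eq (x : ℝ) (hx : 0 < x) : JJ 0 x = JJ 0 0 * Real.exp (-x) := by
  let L : ℝ → ℝ := fun x => Real.exp x * JJ 0 x
  have hL : ∀ x : ℝ, 0 < x → HasDerivAt L 0 x := by
    intro x hx
    refine ((Real.hasDerivAt_exp x).mul (JJ_deriv 0 x hx)).congr_deriv ?_
    rw [zero_add, JJ_ode x hx]; ring
  have hconst : ∀ y : ℝ, 0 < y → L y = L x := by
    intro y hy
    exact isOpen_Ioi.is_const_of_deriv_eq_zero isPreconnected_Ioi
      (fun z hz => (hL z hz).differentiableAt.differentiableWithinAt)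
      (fun z hz => (hL z hz).deriv) hy hx
  have hc : ContinuousWithinAt L (Ici 0) 0 := by
    refine Real.continuous_exp.continuousWithinAt.mul ?_
    exact Complex.continuous_im.continuousAt.comp_continuousWithinAt
      (continuousWithinAt_const.mul II_cont)
  have hc' : Tendsto L (𝓝[>] 0) (𝓝 (L 0)) := hc.mono_left (nhdsWithin_mono _ Ioi_subset_Ici_self)
  have : L 0 = L x := by
    refine tendsto_nhds_unique hc' (tendsto_const_nhds.congr' ?_)
    filter_upwards [self_mem_nhdsWithin] with y hy
    exact (hconst y hy).symm
  simp only [L, Real.exp_zero, one_mul] at this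
  rw [this, Real.exp_neg]
  field_simp

lemma LHS_zero : (∫ t in Ioi (0:ℝ),
        Real.exp (-t) * t ^ (-(2:ℝ)/3) * mittagLeffler23 (t ^ (-(2:ℝ)/3) * 0)) = 1 := by
  have h0 : mittagLeffler23 0 = 1 / π * (Real.sin (2 * π / 3) * Real.Gamma (2/3)) := by
    rw [mittagLeffler23, tsum_eq_single 0]
    · simp
    · intro k hk; simp [hk]
  simp only [mul_zero]
  rw [integral_mul_const, h0]
  have hG := Real.Gamma_eq_integral (show (0:ℝ) < 1/3 by norm_num)
  rw [show (1/3:ℝ) - 1 = -(2:ℝ)/3 by norm_num] at hG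
  rw [← hG]
  have hr := Real.Gamma_mul_Gamma_one_sub (2/3)
  rw [show (1:ℝ) - 2/3 = 1/3 by norm_num, show π * (2/3) = 2 * π / 3 by ring] at hr
  have hs : 0 < Real.sin (2 * π / 3) :=
    Real.sin_pos_of_pos_of_lt_pi (by positivity) (by linarith [Real.pi_pos])
  rw [eq_div_iff hs.ne'] at hr
  have hpi := Real.pi_pos
  calc Real.Gamma (1/3) * (1 / π * (Real.sin (2 * π / 3) * Real.Gamma (2/3)))
      = (Real.Gamma (2/3) * Real.Gamma (1/3) * Real.sin (2 * π / 3)) / π := by ring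
    _ = 1 := by rw [hr, div_self (ne_of_gt hpi)]

/-- the exponential-time mixture identity
`∫₀^∞ e^{-t}·t^{-2/3}·f_{2/3}(t^{-2/3}x) dt = e^{-x}` for `x ≥ 0`. -/
theorem stmt13 :
    ∀ x : ℝ, 0 ≤ x →
      (∫ t in Ioi (0:ℝ),
        Real.exp (-t) * t ^ (-(2:ℝ)/3) * mittagLeffler23 (t ^ (-(2:ℝ)/3) * x)) =
      Real.exp (-x) := by
  intro x hx
  rcases hx.eq_or_lt with rfl | hx'
  · rw [LHS_zero]; simp
  · have h0 := LHS_eq 0 le_rfl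
    rw [LHS_zero] at h0
    have h1 := JJ_eq x hx'
    rw [LHS_eq x hx]
    change 1 = 3 / (2 * π) * JJ 0 0 at h0
    change 3 / (2 * π) * JJ 0 x = _
    rw [h1, ← mul_assoc, ← h0, one_mul]
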